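/- arXiv:1904.09456 — 13 statements merged into one kernel-verified Lean document; each statement's English description precedes it below -/
import Mathlib

section
/- For every random vector Z : Ω → ℝ^d, the certainty equivalent C(Z) = C_up(Z) ∩ C_low(Z) has empty interior in ℝ^d. -/
open Pointwise

theorem stmt1
    {d r s : ℕ} (hd : 0 < d) (hr : 0 < r) (hs : 0 < s)
    {Ω : Type} [Fintype Ω] [Nonempty Ω]
    (Q : Fin s → Ω → ℝ)
    (hQ0 : ∀ j ω, 0 ≤ Q j ω) (hQ1 : ∀ j, ∑ ω : Ω, Q j ω = 1)
    (u : Fin r → (Fin d → ℝ) → ℝ)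
    (hcont : ∀ i, Continuous (u i))
    (hconc : ∀ i, ConcaveOn ℝ Set.univ (u i))
    (hmono : ∀ i, Monotone (u i))
    (hstrict : ∀ i (x y : Fin d → ℝ), (∀ k, x k < y k) → u i x < u i y)
    (Z : Ω → Fin d → ℝ) :
    let E : Fin r → Fin s → ℝ := fun i j => ∑ ω : Ω, Q j ω * u i (Z ω)
    let Cup : Set (Fin d → ℝ) := {c | ∀ i j, E i j ≤ u i c}
    let Clow : Set (Fin d → ℝ) := {c | ∀ i j, u i c ≤ E i j}
    interior (Cup ∩ Clow) = ∅ := by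
  intro E Cup Clow
  rw [Set.eq_empty_iff_forall_notMem]
  intro x hx
  obtain ⟨ε, hε, hb⟩ := Metric.isOpen_iff.mp isOpen_interior x hx
  have hy : (fun k => x k + ε / 2) ∈ Metric.ball x ε := by
    rw [Metric.mem_ball, dist_pi_lt_iff hε]
    intro k
    rw [Real.dist_eq, add_sub_cancel_left, abs_of_pos (by linarith)]
    linarith
  have h1 := (interior_subset hx).1 ⟨0, hr⟩ ⟨0, hs⟩
  have h2 := (interior_subset (hb hy)).2 ⟨0, hr⟩ ⟨0, hs⟩
  have h3 := hstrict ⟨0, hr⟩ x (fun k => x k + ε / 2) (fun k => by linarith)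
  exact absurd (lt_of_lt_of_le h3 (h2.trans h1)) (lt_irrefl _)
end

section
/- For every random variable Z : Ω → ℝ and each pair (i, j) there is a unique c_{i,j} ∈ ℝ with u^i(c_{i,j}) = E_{Q^j} u^i(Z); moreover C_low(Z) = (−∞, min_{i,j} c_{i,j}] and C_up(Z) = [max_{i,j} c_{i,j}, ∞), so that the strong certainty equivalent bd C_low(Z) equals {min_{i,j} c_{i,j}} and the weak certainty equivalent bd C_up(Z) equals {max_{i,j} c_{i,j}}. -/
open Pointwise

theorem stmt4
    {r s : ℕ} (hr : 0 < r) (hs : 0 < s)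
    {Ω : Type} [Fintype Ω] [Nonempty Ω]
    (Q : Fin s → Ω → ℝ)
    (hQ0 : ∀ j ω, 0 ≤ Q j ω) (hQ1 : ∀ j, ∑ ω : Ω, Q j ω = 1)
    (u : Fin r → ℝ → ℝ)
    (hcont : ∀ i, Continuous (u i))
    (hconc : ∀ i, ConcaveOn ℝ Set.univ (u i))
    (hsm : ∀ i, StrictMono (u i))
    (Z : Ω → ℝ) :
    let E : Fin r → Fin s → ℝ := fun i j => ∑ ω : Ω, Q j ω * u i (Z ω)
    let Cup : Set ℝ := {c | ∀ i j, E i j ≤ u i c}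
    let Clow : Set ℝ := {c | ∀ i j, u i c ≤ E i j}
    (∀ i j, ∃! c : ℝ, u i c = E i j) ∧
    ∀ cc : Fin r → Fin s → ℝ, (∀ i j, u i (cc i j) = E i j) →
      Clow = Set.Iic (⨅ i, ⨅ j, cc i j) ∧
      Cup = Set.Ici (⨆ i, ⨆ j, cc i j) ∧
      frontier Clow = {⨅ i, ⨅ j, cc i j} ∧
      frontier Cup = {⨆ i, ⨆ j, cc i j} := by
  intro E Cup Clow
  haveI : Nonempty (Fin r) := ⟨⟨0, hr⟩⟩
  haveI : Nonempty (Fin s) := ⟨⟨0, hs⟩⟩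
  constructor
  · intro i j
    obtain ⟨a, ha⟩ := Finite.exists_min Z
    obtain ⟨b, hb⟩ := Finite.exists_max Z
    have h1 : u i (Z a) ≤ E i j := by
      calc u i (Z a) = ∑ ω : Ω, Q j ω * u i (Z a) := by
            rw [← Finset.sum_mul, hQ1, one_mul]
        _ ≤ E i j := Finset.sum_le_sum fun ω _ =>
            mul_le_mul_of_nonneg_left ((hsm i).monotone (ha ω)) (hQ0 j ω)
    have h2 : E i j ≤ u i (Z b) := by
      calc E i j ≤ ∑ ω : Ω, Q j ω * u i (Z b) := Finset.sum_le_sum fun ω _ =>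
            mul_le_mul_of_nonneg_left ((hsm i).monotone (hb ω)) (hQ0 j ω)
        _ = u i (Z b) := by rw [← Finset.sum_mul, hQ1, one_mul]
    obtain ⟨c, hc⟩ := mem_range_of_exists_le_of_exists_ge (hcont i) ⟨_, h1⟩ ⟨_, h2⟩
    exact ⟨c, hc, fun y hy => (hsm i).injective (hy.trans hc.symm)⟩
  · intro cc hcc
    have hlow : Clow = Set.Iic (⨅ i, ⨅ j, cc i j) := by
      ext c
      simp only [Clow, Set.mem_setOf_eq, Set.mem_Iic]
      rw [le_ciInf_iff (Set.finite_range _).bddBelow]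
      refine forall_congr' fun i => ?_
      rw [le_ciInf_iff (Set.finite_range _).bddBelow]
      refine forall_congr' fun j => ?_
      rw [← hcc, (hsm i).le_iff_le]
    have hup : Cup = Set.Ici (⨆ i, ⨆ j, cc i j) := by
      ext c
      simp only [Cup, Set.mem_setOf_eq, Set.mem_Ici]
      rw [ciSup_le_iff (Set.finite_range _).bddAbove]
      refine forall_congr' fun i => ?_
      rw [ciSup_le_iff (Set.finite_range _).bddAbove]
      refine forall_congr' fun j => ?_
      rw [← hcc, (hsm i).le_iff_le]
    refine ⟨hlow, hup, ?_, ?_⟩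
    · rw [hlow, frontier_Iic]
    · rw [hup, frontier_Ici]
end

section
/- Assume r = 1 and write u = u¹ (multi-prior expected single-utility representation). Then for every random vector Z : Ω → ℝ^d, the weak certainty equivalent satisfies bd C_up(Z) = {c ∈ ℝ^d : u(c) = max_{j=1,…,s} E_{Q^j} u(Z)} and the strong certainty equivalent satisfies bd C_low(Z) = {c ∈ ℝ^d : u(c) = min_{j=1,…,s} E_{Q^j} u(Z)}. -/
open Pointwise

theorem aux_interior {d : ℕ} (S : Set (Fin d → ℝ)) (c : Fin d → ℝ) (σ : ℝ)
    (hc : c ∈ interior S) : ∃ t : ℝ, 0 < t ∧ (fun k => c k + σ * t) ∈ S := by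
  have hcont : Continuous (fun t : ℝ => (fun k => c k + σ * t : Fin d → ℝ)) := by fun_prop
  have h0 : (fun t : ℝ => (fun k => c k + σ * t : Fin d → ℝ)) ⁻¹' S ∈ nhds (0 : ℝ) := by
    apply hcont.continuousAt.preimage_mem_nhds
    simpa using mem_interior_iff_mem_nhds.mp hc
  obtain ⟨ε, hε, hb⟩ := Metric.mem_nhds_iff.mp h0
  refine ⟨ε / 2, by positivity, hb (a := ε / 2) ?_⟩
  rw [Metric.mem_ball, Real.dist_eq, sub_zero, abs_of_pos (by positivity)]
  linarith

theorem stmt5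
    {d s : ℕ} (hd : 0 < d) (hs : 0 < s)
    {Ω : Type} [Fintype Ω] [Nonempty Ω]
    (Q : Fin s → Ω → ℝ)
    (hQ0 : ∀ j ω, 0 ≤ Q j ω) (hQ1 : ∀ j, ∑ ω : Ω, Q j ω = 1)
    (u : (Fin d → ℝ) → ℝ)
    (hcont : Continuous u)
    (hconc : ConcaveOn ℝ Set.univ u)
    (hmono : Monotone u)
    (hstrict : ∀ x y : Fin d → ℝ, (∀ k, x k < y k) → u x < u y)
    (Z : Ω → Fin d → ℝ) :
    let E : Fin s → ℝ := fun j => ∑ ω : Ω, Q j ω * u (Z ω)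
    let Cup : Set (Fin d → ℝ) := {c | ∀ j, E j ≤ u c}
    let Clow : Set (Fin d → ℝ) := {c | ∀ j, u c ≤ E j}
    frontier Cup = {c | u c = ⨆ j, E j} ∧
    frontier Clow = {c | u c = ⨅ j, E j} := by
  intro E Cup Clow
  haveI : Nonempty (Fin s) := ⟨⟨0, hs⟩⟩
  have hup : Cup = {c | (⨆ j, E j) ≤ u c} := by
    ext c
    exact (ciSup_le_iff (Set.finite_range E).bddAbove).symm
  have hlow : Clow = {c | u c ≤ ⨅ j, E j} := by
    ext c
    exact (le_ciInf_iff (Set.finite_range E).bddBelow).symm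
  rw [hup, hlow]
  constructor
  · apply Set.Subset.antisymm
    · intro c hc
      exact (frontier_le_subset_eq continuous_const hcont hc).symm
    · intro c hc
      have hc' : u c = ⨆ j, E j := hc
      refine ⟨subset_closure hc'.ge, fun hi => ?_⟩
      obtain ⟨t, ht, hm⟩ := aux_interior _ c (-1) hi
      have h1 : (⨆ j, E j) ≤ u (fun k => c k + (-1) * t) := hm
      have h2 := hstrict (fun k => c k + (-1) * t) c (fun k => by linarith)
      linarith
  · apply Set.Subset.antisymm
    · intro c hc
      exact frontier_le_subset_eq hcont continuous_const hc
    · intro c hc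
      have hc' : u c = ⨅ j, E j := hc
      refine ⟨subset_closure hc'.le, fun hi => ?_⟩
      obtain ⟨t, ht, hm⟩ := aux_interior _ c 1 hi
      have h1 : u (fun k => c k + 1 * t) ≤ ⨅ j, E j := hm
      have h2 := hstrict c (fun k => c k + 1 * t) (fun k => by linarith)
      linarith
end

section
/- For every claim C : Ω → ℝ^d, the set-valued buy price P^b(C) is a convex lower set (P^b(C) = P^b(C) − ℝ^d_+) and the set-valued sell price P^s(C) is a convex upper set (P^s(C) = P^s(C) + ℝ^d_+). -/
open Pointwise

theorem stmt7
    {d r s : ℕ} (hd : 0 < d) (hr : 0 < r) (hs : 0 < s)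
    {Ω : Type} [Fintype Ω] [Nonempty Ω]
    (Q : Fin s → Ω → ℝ)
    (hQ0 : ∀ j ω, 0 ≤ Q j ω) (hQ1 : ∀ j, ∑ ω : Ω, Q j ω = 1)
    (u : Fin r → (Fin d → ℝ) → ℝ)
    (hcont : ∀ i, Continuous (u i))
    (hconc : ∀ i, ConcaveOn ℝ Set.univ (u i))
    (hmono : ∀ i, Monotone (u i))
    (hstrict : ∀ i (x y : Fin d → ℝ), (∀ k, x k < y k) → u i x < u i y)
    (A : (Fin d → ℝ) → Set (Ω → Fin d → ℝ))
    (hAconv : ∀ x, Convex ℝ (A x))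
    (hAcomb : ∀ (x y : Fin d → ℝ) (a : ℝ), 0 ≤ a → a ≤ 1 →
      a • A x + (1 - a) • A y ⊆ A (a • x + (1 - a) • y))
    (hAmono : ∀ x y : Fin d → ℝ, x ≤ y → A x ⊆ A y)
    (x0 : Fin d → ℝ) :
    let U : (Ω → Fin d → ℝ) → (Fin r × Fin s → ℝ) :=
      fun W ij => ∑ ω : Ω, Q ij.2 ω * u ij.1 (W ω)
    let V : (Fin d → ℝ) → (Ω → Fin d → ℝ) → Set (Fin r × Fin s → ℝ) :=
      fun x C => closure {v | ∃ W ∈ A x, v ≤ U (W + C)}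
    let Pb : (Ω → Fin d → ℝ) → Set (Fin d → ℝ) :=
      fun C => {p | V x0 0 ⊆ V (x0 - p) C}
    let Ps : (Ω → Fin d → ℝ) → Set (Fin d → ℝ) :=
      fun C => {p | V x0 0 ⊆ V (x0 + p) (-C)}
    ∀ C : Ω → Fin d → ℝ,
      Convex ℝ (Pb C) ∧ Pb C = Pb C - {x : Fin d → ℝ | 0 ≤ x} ∧
      Convex ℝ (Ps C) ∧ Ps C = Ps C + {x : Fin d → ℝ | 0 ≤ x} := by
  intro U V Pb Ps C
  have key : ∀ (D : Ω → Fin d → ℝ) (x y : Fin d → ℝ) (a b : ℝ), 0 ≤ a → 0 ≤ b → a + b = 1 →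
      ∀ v, v ∈ V x D → v ∈ V y D → v ∈ V (a • x + b • y) D := by
    intro D x y a b ha hb hab v hv hw
    obtain rfl : b = 1 - a := by linarith
    have hc : Continuous (Function.uncurry
        (fun v w : Fin r × Fin s → ℝ => a • v + (1 - a) • w)) := by
      unfold Function.uncurry
      fun_prop
    have h := map_mem_closure₂ (u := {v | ∃ W ∈ A (a • x + (1 - a) • y), v ≤ U (W + D)})
      hc hv hw ?_
    · have e : a • v + (1 - a) • v = v := by rw [← add_smul]; simp
      rw [← e]; exact h
    · rintro v ⟨W, hW, hvW⟩ w ⟨Z, hZ, hwZ⟩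
      refine ⟨a • W + (1 - a) • Z, hAcomb x y a ha (by linarith)
        (Set.add_mem_add (Set.smul_mem_smul_set hW) (Set.smul_mem_smul_set hZ)), ?_⟩
      intro ij
      have h1 := mul_le_mul_of_nonneg_left (hvW ij) ha
      have h2 := mul_le_mul_of_nonneg_left (hwZ ij) hb
      refine (add_le_add h1 h2).trans ?_
      simp only [U, Finset.mul_sum, ← Finset.sum_add_distrib]
      refine Finset.sum_le_sum fun ω _ => ?_
      have h3 := (hconc ij.1).2 (Set.mem_univ ((W + D) ω)) (Set.mem_univ ((Z + D) ω)) ha hb hab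
      have e : a • (W + D) ω + (1 - a) • (Z + D) ω = (a • W + (1 - a) • Z + D) ω := by
        ext k
        simp
        ring
      rw [e] at h3
      have h4 := mul_le_mul_of_nonneg_left h3 (hQ0 ij.2 ω)
      simp only [smul_eq_mul] at h4
      linarith
  have mono : ∀ (D : Ω → Fin d → ℝ) (x y : Fin d → ℝ), x ≤ y → V x D ⊆ V y D := by
    intro D x y hxy
    exact closure_mono fun v ⟨W, hW, h⟩ => ⟨W, hAmono x y hxy hW, h⟩
  refine ⟨?_, ?_, ?_, ?_⟩
  · intro p hp q hq a b ha hb hab v hv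
    have h := key C _ _ a b ha hb hab v (hp hv) (hq hv)
    have e : a • (x0 - p) + b • (x0 - q) = x0 - (a • p + b • q) := by
      obtain rfl : b = 1 - a := by linarith
      module
    rwa [e] at h
  · ext p
    constructor
    · intro hp
      exact ⟨p, hp, 0, by simp, by simp⟩
    · rintro ⟨q, hq, z, hz, rfl⟩
      refine Set.Subset.trans hq (mono C _ _ ?_)
      intro k
      have := hz k
      simp at this ⊢
      linarith
  · intro p hp q hq a b ha hb hab v hv
    have h := key (-C) _ _ a b ha hb hab v (hp hv) (hq hv)
    have e : a • (x0 + p) + b • (x0 + q) = x0 + (a • p + b • q) := by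
      obtain rfl : b = 1 - a := by linarith
      module
    rwa [e] at h
  · ext p
    constructor
    · intro hp
      exact ⟨p, hp, 0, by simp, by simp⟩
    · rintro ⟨q, hq, z, hz, rfl⟩
      refine Set.Subset.trans hq (mono (-C) _ _ ?_)
      intro k
      have := hz k
      simp at this ⊢
      linarith
end

section
/- The buy price map is concave and the sell price map is convex in the Minkowski sense: for all claims C¹, C² : Ω → ℝ^d and every λ ∈ [0,1], with C^λ := λC¹ + (1−λ)C², one has λP^b(C¹) + (1−λ)P^b(C²) ⊆ P^b(C^λ) and λP^s(C¹) + (1−λ)P^s(C²) ⊆ P^s(C^λ), where the sums of sets are Minkowski sums. -/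
open Pointwise

theorem stmt9
    {d r s : ℕ} (hd : 0 < d) (hr : 0 < r) (hs : 0 < s)
    {Ω : Type} [Fintype Ω] [Nonempty Ω]
    (Q : Fin s → Ω → ℝ)
    (hQ0 : ∀ j ω, 0 ≤ Q j ω) (hQ1 : ∀ j, ∑ ω : Ω, Q j ω = 1)
    (u : Fin r → (Fin d → ℝ) → ℝ)
    (hcont : ∀ i, Continuous (u i))
    (hconc : ∀ i, ConcaveOn ℝ Set.univ (u i))
    (hmono : ∀ i, Monotone (u i))
    (hstrict : ∀ i (x y : Fin d → ℝ), (∀ k, x k < y k) → u i x < u i y)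
    (A : (Fin d → ℝ) → Set (Ω → Fin d → ℝ))
    (hAconv : ∀ x, Convex ℝ (A x))
    (hAcomb : ∀ (x y : Fin d → ℝ) (a : ℝ), 0 ≤ a → a ≤ 1 →
      a • A x + (1 - a) • A y ⊆ A (a • x + (1 - a) • y))
    (hAmono : ∀ x y : Fin d → ℝ, x ≤ y → A x ⊆ A y)
    (x0 : Fin d → ℝ) :
    let U : (Ω → Fin d → ℝ) → (Fin r × Fin s → ℝ) :=
      fun W ij => ∑ ω : Ω, Q ij.2 ω * u ij.1 (W ω)
    let V : (Fin d → ℝ) → (Ω → Fin d → ℝ) → Set (Fin r × Fin s → ℝ) :=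
      fun x C => closure {v | ∃ W ∈ A x, v ≤ U (W + C)}
    let Pb : (Ω → Fin d → ℝ) → Set (Fin d → ℝ) :=
      fun C => {p | V x0 0 ⊆ V (x0 - p) C}
    let Ps : (Ω → Fin d → ℝ) → Set (Fin d → ℝ) :=
      fun C => {p | V x0 0 ⊆ V (x0 + p) (-C)}
    ∀ (C₁ C₂ : Ω → Fin d → ℝ) (a : ℝ), 0 ≤ a → a ≤ 1 →
      a • Pb C₁ + (1 - a) • Pb C₂ ⊆ Pb (a • C₁ + (1 - a) • C₂) ∧
      a • Ps C₁ + (1 - a) • Ps C₂ ⊆ Ps (a • C₁ + (1 - a) • C₂) := by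
  intro U V Pb Ps
  have key : ∀ (x y : Fin d → ℝ) (C D : Ω → Fin d → ℝ) (a : ℝ), 0 ≤ a → a ≤ 1 →
      ∀ v, v ∈ V x C → v ∈ V y D →
        v ∈ V (a • x + (1 - a) • y) (a • C + (1 - a) • D) := by
    intro x y C D a ha0 ha1 v hv hw
    have hf : Continuous (Function.uncurry
        (fun p q : Fin r × Fin s → ℝ => a • p + (1 - a) • q)) := by
      unfold Function.uncurry
      fun_prop
    have h := map_mem_closure₂ (u := {v | ∃ W ∈ A (a • x + (1 - a) • y),
        v ≤ U (W + (a • C + (1 - a) • D))}) hf hv hw ?_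
    · have e : a • v + (1 - a) • v = v := by rw [← add_smul]; simp
      simp only [e] at h
      exact h
    · rintro p ⟨W, hW, hp⟩ q ⟨Z, hZ, hq⟩
      refine ⟨a • W + (1 - a) • Z, hAcomb x y a ha0 ha1
        (Set.add_mem_add (Set.smul_mem_smul_set hW) (Set.smul_mem_smul_set hZ)), ?_⟩
      have e : a • W + (1 - a) • Z + (a • C + (1 - a) • D)
          = a • (W + C) + (1 - a) • (Z + D) := by
        rw [smul_add, smul_add]; abel
      rw [e]
      intro ij
      have h1 : p ij ≤ ∑ ω : Ω, Q ij.2 ω * u ij.1 ((W + C) ω) := hp ij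
      have h2 : q ij ≤ ∑ ω : Ω, Q ij.2 ω * u ij.1 ((Z + D) ω) := hq ij
      have hb : 0 ≤ 1 - a := by linarith
      have h3 : a * ∑ ω : Ω, Q ij.2 ω * u ij.1 ((W + C) ω)
          + (1 - a) * ∑ ω : Ω, Q ij.2 ω * u ij.1 ((Z + D) ω)
          ≤ ∑ ω : Ω, Q ij.2 ω * u ij.1 ((a • (W + C) + (1 - a) • (Z + D)) ω) := by
        rw [Finset.mul_sum, Finset.mul_sum, ← Finset.sum_add_distrib]
        refine Finset.sum_le_sum fun ω _ => ?_
        have h4 := (hconc ij.1).2 (Set.mem_univ ((W + C) ω)) (Set.mem_univ ((Z + D) ω))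
          ha0 hb (by ring)
        have h5 := mul_le_mul_of_nonneg_left h4 (hQ0 ij.2 ω)
        simp only [smul_eq_mul] at h5
        refine le_trans (le_of_eq ?_) h5
        ring
      have h6 := mul_le_mul_of_nonneg_left h1 ha0
      have h7 := mul_le_mul_of_nonneg_left h2 hb
      exact (add_le_add h6 h7).trans h3
  intro C₁ C₂ a ha0 ha1
  constructor
  · rintro _ ⟨_, ⟨p, hp, rfl⟩, _, ⟨q, hq, rfl⟩, rfl⟩ v hv
    have h := key (x0 - p) (x0 - q) C₁ C₂ a ha0 ha1 v (hp hv) (hq hv)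
    have e : a • (x0 - p) + (1 - a) • (x0 - q) = x0 - (a • p + (1 - a) • q) := by
      module
    rw [e] at h
    exact h
  · rintro _ ⟨_, ⟨p, hp, rfl⟩, _, ⟨q, hq, rfl⟩, rfl⟩ v hv
    have h := key (x0 + p) (x0 + q) (-C₁) (-C₂) a ha0 ha1 v (hp hv) (hq hv)
    have e : a • (x0 + p) + (1 - a) • (x0 + q) = x0 + (a • p + (1 - a) • q) := by
      module
    have e2 : a • (-C₁) + (1 - a) • (-C₂) = -(a • C₁ + (1 - a) • C₂) := by
      module
    rw [e, e2] at h
    exact h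
end

section
/- For every claim C : Ω → ℝ^d and every p ∈ P^b(C) ∩ P^s(C), all three value sets coincide: V(x0 − p, C) = V(x0, 0) = V(x0 + p, −C). -/
open Pointwise

theorem aux_iter {ι : Type*} (V0 V1 V2 : Set (ι → ℝ)) (hc : IsClosed V0)
    (hne : V1.Nonempty → V0.Nonempty)
    (h2 : V0 ⊆ V2) (hm : ∀ a ∈ V1, ∀ b ∈ V2, (1/2 : ℝ) • a + (1/2 : ℝ) • b ∈ V0) :
    V1 ⊆ V0 := by
  intro a ha
  obtain ⟨v, hv⟩ := hne ⟨a, ha⟩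
  have key : ∀ n : ℕ, a + ((1/2 : ℝ)^n) • (v - a) ∈ V0 := by
    intro n
    induction n with
    | zero => simpa using hv
    | succ n ih =>
      have := hm a ha _ (h2 ih)
      convert this using 1
      ext k
      simp only [Pi.add_apply, Pi.smul_apply, Pi.sub_apply, smul_eq_mul]
      ring
  have ht : Filter.Tendsto (fun n : ℕ => a + ((1/2 : ℝ)^n) • (v - a)) Filter.atTop
      (nhds (a + (0 : ℝ) • (v - a))) :=
    ((tendsto_pow_atTop_nhds_zero_of_lt_one (by norm_num) (by norm_num)).smul_const _).const_add _
  rw [zero_smul, add_zero] at ht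
  exact hc.mem_of_tendsto ht (Filter.Eventually.of_forall key)

theorem stmt10
    {d r s : ℕ} (hd : 0 < d) (hr : 0 < r) (hs : 0 < s)
    {Ω : Type} [Fintype Ω] [Nonempty Ω]
    (Q : Fin s → Ω → ℝ)
    (hQ0 : ∀ j ω, 0 ≤ Q j ω) (hQ1 : ∀ j, ∑ ω : Ω, Q j ω = 1)
    (u : Fin r → (Fin d → ℝ) → ℝ)
    (hcont : ∀ i, Continuous (u i))
    (hconc : ∀ i, ConcaveOn ℝ Set.univ (u i))
    (hmono : ∀ i, Monotone (u i))
    (hstrict : ∀ i (x y : Fin d → ℝ), (∀ k, x k < y k) → u i x < u i y)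
    (A : (Fin d → ℝ) → Set (Ω → Fin d → ℝ))
    (hAconv : ∀ x, Convex ℝ (A x))
    (hAcomb : ∀ (x y : Fin d → ℝ) (a : ℝ), 0 ≤ a → a ≤ 1 →
      a • A x + (1 - a) • A y ⊆ A (a • x + (1 - a) • y))
    (hAmono : ∀ x y : Fin d → ℝ, x ≤ y → A x ⊆ A y)
    (hAtr : ∀ (x : Fin d → ℝ) (W : Ω → Fin d → ℝ), W ∈ A x →
      ∀ c : Fin d → ℝ, (fun ω => W ω + c) ∈ A (x + c))
    (x0 : Fin d → ℝ) :
    let U : (Ω → Fin d → ℝ) → (Fin r × Fin s → ℝ) :=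
      fun W ij => ∑ ω : Ω, Q ij.2 ω * u ij.1 (W ω)
    let V : (Fin d → ℝ) → (Ω → Fin d → ℝ) → Set (Fin r × Fin s → ℝ) :=
      fun x C => closure {v | ∃ W ∈ A x, v ≤ U (W + C)}
    let Pb : (Ω → Fin d → ℝ) → Set (Fin d → ℝ) :=
      fun C => {p | V x0 0 ⊆ V (x0 - p) C}
    let Ps : (Ω → Fin d → ℝ) → Set (Fin d → ℝ) :=
      fun C => {p | V x0 0 ⊆ V (x0 + p) (-C)}
    ∀ (C : Ω → Fin d → ℝ) (p : Fin d → ℝ), p ∈ Pb C ∩ Ps C →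
      V (x0 - p) C = V x0 0 ∧ V x0 0 = V (x0 + p) (-C) := by
  intro U V Pb Ps C p hp
  obtain ⟨hb, hsell⟩ := hp
  have hb' : V x0 0 ⊆ V (x0 - p) C := hb
  have hs' : V x0 0 ⊆ V (x0 + p) (-C) := hsell
  have hne : ∀ (x : Fin d → ℝ) (D : Ω → Fin d → ℝ), (V x D).Nonempty → (V x0 0).Nonempty := by
    intro x D h
    obtain ⟨v, W, hW, -⟩ := closure_nonempty_iff.1 h
    have h1 := hAtr x W hW (x0 - x)
    rw [add_sub_cancel] at h1
    exact ⟨_, subset_closure ⟨_, h1, le_refl _⟩⟩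
  have hmid : ∀ a ∈ V (x0 - p) C, ∀ b ∈ V (x0 + p) (-C),
      (1/2 : ℝ) • a + (1/2 : ℝ) • b ∈ V x0 0 := by
    intro a ha b hb
    have hf : Continuous (Function.uncurry
        (fun a b : Fin r × Fin s → ℝ => (1/2 : ℝ) • a + (1/2 : ℝ) • b)) := by
      unfold Function.uncurry
      fun_prop
    refine map_mem_closure₂ (f := fun a b : Fin r × Fin s → ℝ => (1/2 : ℝ) • a + (1/2 : ℝ) • b) hf ha hb ?_
    rintro a ⟨W1, hW1, h1⟩ b ⟨W2, hW2, h2⟩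
    refine ⟨(1/2 : ℝ) • W1 + (1/2 : ℝ) • W2, ?_, ?_⟩
    · have h := hAcomb (x0 - p) (x0 + p) (1/2) (by norm_num) (by norm_num)
        (Set.add_mem_add (Set.smul_mem_smul_set hW1) (Set.smul_mem_smul_set hW2))
      have e : (1/2 : ℝ) • (x0 - p) + (1 - 1/2 : ℝ) • (x0 + p) = x0 := by
        ext k
        simp only [Pi.add_apply, Pi.smul_apply, Pi.sub_apply, smul_eq_mul]
        ring
      rw [e] at h
      convert h using 3
      norm_num
    · intro ij
      have h1' : a ij ≤ ∑ ω : Ω, Q ij.2 ω * u ij.1 ((W1 + C) ω) := h1 ij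
      have h2' : b ij ≤ ∑ ω : Ω, Q ij.2 ω * u ij.1 ((W2 + -C) ω) := h2 ij
      change (1/2 : ℝ) * a ij + (1/2 : ℝ) * b ij ≤
        ∑ ω : Ω, Q ij.2 ω * u ij.1 (((1/2 : ℝ) • W1 + (1/2 : ℝ) • W2 + 0) ω)
      have h3 : (1/2 : ℝ) * (∑ ω : Ω, Q ij.2 ω * u ij.1 ((W1 + C) ω)) +
          (1/2 : ℝ) * (∑ ω : Ω, Q ij.2 ω * u ij.1 ((W2 + -C) ω)) ≤
          ∑ ω : Ω, Q ij.2 ω * u ij.1 (((1/2 : ℝ) • W1 + (1/2 : ℝ) • W2 + 0) ω) := by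
        rw [Finset.mul_sum, Finset.mul_sum, ← Finset.sum_add_distrib]
        refine Finset.sum_le_sum fun ω _ => ?_
        have hc := (hconc ij.1).2 (Set.mem_univ ((W1 + C) ω)) (Set.mem_univ ((W2 + -C) ω))
          (show (0 : ℝ) ≤ 1/2 by norm_num) (show (0 : ℝ) ≤ 1/2 by norm_num) (by norm_num)
        have e : (1/2 : ℝ) • (W1 + C) ω + (1/2 : ℝ) • (W2 + -C) ω =
            ((1/2 : ℝ) • W1 + (1/2 : ℝ) • W2 + 0) ω := by
          ext k
          simp only [Pi.add_apply, Pi.smul_apply, Pi.neg_apply, Pi.zero_apply, smul_eq_mul]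
          ring
        rw [e] at hc
        simp only [smul_eq_mul] at hc
        have := mul_le_mul_of_nonneg_left hc (hQ0 ij.2 ω)
        linarith
      linarith
  refine ⟨Set.Subset.antisymm ?_ hb', Set.Subset.antisymm hs' ?_⟩
  · exact aux_iter _ _ _ isClosed_closure (hne _ _) hs' hmid
  · refine aux_iter _ _ _ isClosed_closure (hne _ _) hb' ?_
    intro a ha b hb
    rw [add_comm]
    exact hmid b hb a ha
end

section
/- Let C : Ω → ℝ^d be a claim and assume in addition that the value of the utility maximization problem strictly improves with initial capital in the sense that for every z ∈ ℝ^d and every ε ∈ ℝ^d with all coordinates strictly positive, V(z + ε, C) ≠ V(z, C). Then the intersection P^b(C) ∩ P^s(C) has empty interior in ℝ^d. -/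
open Pointwise

theorem cancel_aux {E : Type*} [AddCommGroup E] [Module ℝ E] [TopologicalSpace E]
    [ContinuousAdd E] [ContinuousSMul ℝ E] (K : Set E) (hK : IsClosed K) (v w : E)
    (hw : w ∈ K) (a : ℝ) (ha : 0 < a) (ha1 : a ≤ 1)
    (h : ∀ w ∈ K, a • v + (1 - a) • w ∈ K) : v ∈ K := by
  have key : ∀ n : ℕ, v + (1 - a) ^ n • (w - v) ∈ K := by
    intro n
    induction n with
    | zero => simpa using hw
    | succ n ih =>
      have := h _ ih
      convert this using 1
      rw [pow_succ]
      module
  have ht : Filter.Tendsto (fun n : ℕ => v + (1 - a) ^ n • (w - v)) Filter.atTop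
      (nhds (v + (0 : ℝ) • (w - v))) := by
    apply Filter.Tendsto.const_add
    apply Filter.Tendsto.smul_const
    exact tendsto_pow_atTop_nhds_zero_of_lt_one (by linarith) (by linarith)
  rw [zero_smul, add_zero] at ht
  exact hK.mem_of_tendsto ht (Filter.Eventually.of_forall key)

theorem stmt11
    {d r s : ℕ} (hd : 0 < d) (hr : 0 < r) (hs : 0 < s)
    {Ω : Type} [Fintype Ω] [Nonempty Ω]
    (Q : Fin s → Ω → ℝ)
    (hQ0 : ∀ j ω, 0 ≤ Q j ω) (hQ1 : ∀ j, ∑ ω : Ω, Q j ω = 1)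
    (u : Fin r → (Fin d → ℝ) → ℝ)
    (hcont : ∀ i, Continuous (u i))
    (hconc : ∀ i, ConcaveOn ℝ Set.univ (u i))
    (hmono : ∀ i, Monotone (u i))
    (hstrict : ∀ i (x y : Fin d → ℝ), (∀ k, x k < y k) → u i x < u i y)
    (A : (Fin d → ℝ) → Set (Ω → Fin d → ℝ))
    (hAconv : ∀ x, Convex ℝ (A x))
    (hAcomb : ∀ (x y : Fin d → ℝ) (a : ℝ), 0 ≤ a → a ≤ 1 →
      a • A x + (1 - a) • A y ⊆ A (a • x + (1 - a) • y))
    (hAmono : ∀ x y : Fin d → ℝ, x ≤ y → A x ⊆ A y)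
    (hAtr : ∀ (x : Fin d → ℝ) (W : Ω → Fin d → ℝ), W ∈ A x →
      ∀ c : Fin d → ℝ, (fun ω => W ω + c) ∈ A (x + c))
    (x0 : Fin d → ℝ) :
    let U : (Ω → Fin d → ℝ) → (Fin r × Fin s → ℝ) :=
      fun W ij => ∑ ω : Ω, Q ij.2 ω * u ij.1 (W ω)
    let V : (Fin d → ℝ) → (Ω → Fin d → ℝ) → Set (Fin r × Fin s → ℝ) :=
      fun x C => closure {v | ∃ W ∈ A x, v ≤ U (W + C)}
    let Pb : (Ω → Fin d → ℝ) → Set (Fin d → ℝ) :=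
      fun C => {p | V x0 0 ⊆ V (x0 - p) C}
    let Ps : (Ω → Fin d → ℝ) → Set (Fin d → ℝ) :=
      fun C => {p | V x0 0 ⊆ V (x0 + p) (-C)}
    ∀ C : Ω → Fin d → ℝ,
      (∀ (z ε : Fin d → ℝ), (∀ k, 0 < ε k) → V (z + ε) C ≠ V z C) →
      interior (Pb C ∩ Ps C) = ∅ := by
  intro U V Pb Ps C hne
  have hUmono : ∀ W W' : Ω → Fin d → ℝ, W ≤ W' → U W ≤ U W' := by
    intro W W' h ij
    exact Finset.sum_le_sum fun ω _ => mul_le_mul_of_nonneg_left (hmono _ (h ω)) (hQ0 _ _)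
  have hUconc : ∀ (W W' : Ω → Fin d → ℝ) (a : ℝ), 0 ≤ a → a ≤ 1 →
      a • U W + (1 - a) • U W' ≤ U (a • W + (1 - a) • W') := by
    intro W W' a h0 h1 ij
    simp only [U, Pi.add_apply, Pi.smul_apply, smul_eq_mul, Finset.mul_sum]
    rw [← Finset.sum_add_distrib]
    refine Finset.sum_le_sum fun ω _ => ?_
    have := (hconc ij.1).2 (Set.mem_univ (W ω)) (Set.mem_univ (W' ω)) h0
      (sub_nonneg.2 h1) (by ring)
    simp only [smul_eq_mul] at this
    have := mul_le_mul_of_nonneg_left this (hQ0 ij.2 ω)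
    linarith
  have comb : ∀ (x y : Fin d → ℝ) (D D' : Ω → Fin d → ℝ) (a : ℝ), 0 ≤ a → a ≤ 1 →
      ∀ v ∈ V x D, ∀ w ∈ V y D',
      a • v + (1 - a) • w ∈ V (a • x + (1 - a) • y) (a • D + (1 - a) • D') := by
    intro x y D D' a h0 h1 v hv w hw
    refine map_mem_closure₂ (f := fun v w => a • v + (1 - a) • w) (by fun_prop) hv hw ?_
    rintro v ⟨W, hW, hv⟩ w ⟨W', hW', hw⟩
    refine ⟨a • W + (1 - a) • W', hAcomb x y a h0 h1
      (Set.add_mem_add (Set.smul_mem_smul_set hW) (Set.smul_mem_smul_set hW')), ?_⟩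
    have h1' : 0 ≤ 1 - a := sub_nonneg.2 h1
    have e : a • W + (1 - a) • W' + (a • D + (1 - a) • D')
        = a • (W + D) + (1 - a) • (W' + D') := by module
    rw [e]
    exact (add_le_add (smul_le_smul_of_nonneg_left hv h0)
      (smul_le_smul_of_nonneg_left hw h1')).trans (hUconc _ _ a h0 h1)
  have shift : ∀ (x c : Fin d → ℝ) (D D' : Ω → Fin d → ℝ),
      (∀ ω, D ω ≤ c + D' ω) → V x D ⊆ V (x + c) D' := by
    intro x c D D' h
    apply closure_mono
    rintro v ⟨W, hW, hv⟩
    refine ⟨_, hAtr x W hW c, hv.trans (hUmono _ _ ?_)⟩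
    intro ω
    have := add_le_add_right (h ω) (W ω)
    simpa [add_assoc] using this
  rw [Set.eq_empty_iff_forall_notMem]
  intro p hp
  rw [mem_interior_iff_mem_nhds, Metric.mem_nhds_iff] at hp
  obtain ⟨ρ, hρ, hball⟩ := hp
  obtain ⟨η, hη, hηρ⟩ : ∃ η : ℝ, 0 < η ∧ 2 * η < ρ := ⟨ρ / 4, by linarith, by linarith⟩
  let one : Fin d → ℝ := fun _ => 1
  have hp1 : p ∈ Pb C := (hball (Metric.mem_ball_self hρ)).1
  have hp2 : p - (2 * η) • one ∈ Ps C := by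
    refine (hball ?_).2
    rw [Metric.mem_ball, dist_pi_lt_iff hρ]
    intro k
    simp only [one, Real.dist_eq, Pi.sub_apply, Pi.smul_apply, smul_eq_mul]
    rw [abs_lt]
    constructor <;> linarith
  have hdown : V x0 0 ⊆ V (x0 - η • one) 0 := by
    intro v hv
    have := comb _ _ _ _ (1/2) (by norm_num) (by norm_num) v (hp1 hv) v (hp2 hv)
    have e1 : (1 / 2 : ℝ) • v + (1 - 1 / 2 : ℝ) • v = v := by module
    have e2 : (1 / 2 : ℝ) • (x0 - p) + (1 - 1 / 2 : ℝ) • (x0 + (p - (2 * η) • one))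
        = x0 - η • one := by module
    have e3 : (1 / 2 : ℝ) • C + (1 - 1 / 2 : ℝ) • -C = 0 := by module
    rwa [e1, e2, e3] at this
  have hup : ∀ t : ℝ, 0 ≤ t → V (x0 + (t * η) • one) 0 ⊆ V x0 0 := by
    intro t ht v hv
    have hw : (V x0 0).Nonempty := by
      obtain ⟨v', W, hW, -⟩ := closure_nonempty_iff.1 ⟨v, hv⟩
      have := hAtr _ W hW (-((t * η) • one))
      rw [add_neg_cancel_right] at this
      exact ⟨_, subset_closure ⟨_, this, le_rfl⟩⟩
    obtain ⟨w, hw⟩ := hw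
    have ht1 : 0 < 1 + t := by linarith
    refine cancel_aux _ isClosed_closure v w hw (1 / (1 + t)) (by positivity)
      (by rw [div_le_one ht1]; linarith) ?_
    intro w hw
    have := comb _ _ _ _ (1 / (1 + t)) (by positivity)
      (by rw [div_le_one ht1]; linarith) v hv w (hdown hw)
    convert this using 1
    change V _ _ = V _ _
    congr 1
    · ext k
      simp only [one, Pi.add_apply, Pi.sub_apply, Pi.smul_apply, smul_eq_mul]
      field_simp
      ring
    · simp
  have hC : ∀ ω k, |C ω k| ≤ ‖C‖ := fun ω k =>
    (norm_le_pi_norm (C ω) k).trans (norm_le_pi_norm C ω)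
  have hbig : V (x0 + ‖C‖ • one + one) C ⊆ V x0 0 := by
    have h1 : V (x0 + ‖C‖ • one + one) C ⊆ V (x0 + ‖C‖ • one + one + ‖C‖ • one) 0 := by
      apply shift
      intro ω k
      simpa [one] using (abs_le.1 (hC ω k)).2
    have h2 := hup ((2 * ‖C‖ + 1) / η) (by positivity)
    rw [div_mul_cancel₀ _ hη.ne'] at h2
    have e : x0 + ‖C‖ • one + one + ‖C‖ • one = x0 + (2 * ‖C‖ + 1) • one := by module
    rw [e] at h1
    exact h1.trans h2
  have hlow : V x0 0 ⊆ V (x0 + ‖C‖ • one) C := by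
    apply shift
    intro ω k
    have := (abs_le.1 (hC ω k)).1
    simp [one]
    linarith
  refine hne (x0 + ‖C‖ • one) one (fun k => by simp [one]) ?_
  refine Set.Subset.antisymm (hbig.trans hlow) ?_
  apply shift
  intro ω k
  simp [one]
end

section
/- For every claim C : Ω → ℝ^d, the set-valued buy price P^b(C) and the set-valued sell price P^s(C) are closed subsets of ℝ^d. -/
open Pointwise

theorem aux_closed {d : ℕ} {E : Type*} [NormedAddCommGroup E] [NormedSpace ℝ E]
    (S : (Fin d → ℝ) → Set E)
    (hcomb : ∀ (x y : Fin d → ℝ) (a : ℝ), 0 ≤ a → a ≤ 1 → ∀ v ∈ S x, ∀ w ∈ S y,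
      a • v + (1 - a) • w ∈ S (a • x + (1 - a) • y))
    (hmono : ∀ x y : Fin d → ℝ, x ≤ y → S x ⊆ S y)
    (hne : ∀ x y, (S x).Nonempty → (S y).Nonempty) (v : E) :
    IsClosed {x | v ∈ closure (S x)} := by
  rw [← isSeqClosed_iff_isClosed]
  intro y x hy hyx
  have hy' : ∀ n, v ∈ closure (S (y n)) := hy
  obtain ⟨w, hw⟩ := hne _ (x - 1) (closure_nonempty_iff.1 ⟨v, hy' 0⟩)
  have hδ : Filter.Tendsto (fun n => dist (y n) x) Filter.atTop (nhds 0) :=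
    tendsto_iff_dist_tendsto_zero.1 hyx
  have ha : Filter.Tendsto (fun n => 1 / (1 + dist (y n) x)) Filter.atTop (nhds (1 : ℝ)) := by
    have h := (tendsto_const_nhds (x := (1 : ℝ))).div (hδ.const_add 1) (by norm_num)
    rw [add_zero, div_one] at h
    exact h
  have hlim : Filter.Tendsto (fun n => (1 / (1 + dist (y n) x)) • v
      + (1 - 1 / (1 + dist (y n) x)) • w) Filter.atTop (nhds v) := by
    have h := (ha.smul_const v).add ((ha.const_sub 1).smul_const w)
    simpa using h
  refine isClosed_closure.mem_of_tendsto hlim (Filter.Eventually.of_forall fun n => ?_)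
  have hpos : 0 ≤ dist (y n) x := dist_nonneg
  generalize hδn : dist (y n) x = δ at hpos ⊢
  have hle : y n ≤ x + fun _ => δ := by
    intro k
    have h1 := dist_le_pi_dist (y n) x k
    rw [Real.dist_eq, hδn] at h1
    have h2 := le_abs_self (y n k - x k)
    simp only [Pi.add_apply]
    linarith
  have hv : v ∈ closure (S (x + fun _ => δ)) := closure_mono (hmono _ _ hle) (hy' n)
  have heq : (1 / (1 + δ)) • (x + fun _ => δ) + (1 - 1 / (1 + δ)) • (x - 1) = x := by
    ext k
    simp only [Pi.add_apply, Pi.smul_apply, Pi.sub_apply, Pi.one_apply, smul_eq_mul]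
    field_simp
    ring
  have hc : Continuous (fun z : E => (1 / (1 + δ)) • z + (1 - 1 / (1 + δ)) • w) := by fun_prop
  refine map_mem_closure (f := fun z : E => (1 / (1 + δ)) • z + (1 - 1 / (1 + δ)) • w) hc hv
    (fun z hz => ?_)
  have h := hcomb _ _ (1 / (1 + δ)) (by positivity)
    (by rw [div_le_one (by positivity)]; linarith) z hz w hw
  rwa [heq] at h

theorem stmt12
    {d r s : ℕ} (hd : 0 < d) (hr : 0 < r) (hs : 0 < s)
    {Ω : Type} [Fintype Ω] [Nonempty Ω]
    (Q : Fin s → Ω → ℝ)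
    (hQ0 : ∀ j ω, 0 ≤ Q j ω) (hQ1 : ∀ j, ∑ ω : Ω, Q j ω = 1)
    (u : Fin r → (Fin d → ℝ) → ℝ)
    (hcont : ∀ i, Continuous (u i))
    (hconc : ∀ i, ConcaveOn ℝ Set.univ (u i))
    (hmono : ∀ i, Monotone (u i))
    (hstrict : ∀ i (x y : Fin d → ℝ), (∀ k, x k < y k) → u i x < u i y)
    (A : (Fin d → ℝ) → Set (Ω → Fin d → ℝ))
    (hAconv : ∀ x, Convex ℝ (A x))
    (hAcomb : ∀ (x y : Fin d → ℝ) (a : ℝ), 0 ≤ a → a ≤ 1 →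
      a • A x + (1 - a) • A y ⊆ A (a • x + (1 - a) • y))
    (hAmono : ∀ x y : Fin d → ℝ, x ≤ y → A x ⊆ A y)
    (hAtr : ∀ (x : Fin d → ℝ) (W : Ω → Fin d → ℝ), W ∈ A x →
      ∀ c : Fin d → ℝ, (fun ω => W ω + c) ∈ A (x + c))
    (hAcont : ∀ (x : Fin d → ℝ) (xk : ℕ → Fin d → ℝ), Antitone xk →
      Filter.Tendsto xk Filter.atTop (nhds x) → A x = ⋂ n, A (xk n))
    (x0 : Fin d → ℝ) :
    let U : (Ω → Fin d → ℝ) → (Fin r × Fin s → ℝ) :=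
      fun W ij => ∑ ω : Ω, Q ij.2 ω * u ij.1 (W ω)
    let V : (Fin d → ℝ) → (Ω → Fin d → ℝ) → Set (Fin r × Fin s → ℝ) :=
      fun x C => closure {v | ∃ W ∈ A x, v ≤ U (W + C)}
    let Pb : (Ω → Fin d → ℝ) → Set (Fin d → ℝ) :=
      fun C => {p | V x0 0 ⊆ V (x0 - p) C}
    let Ps : (Ω → Fin d → ℝ) → Set (Fin d → ℝ) :=
      fun C => {p | V x0 0 ⊆ V (x0 + p) (-C)}
    ∀ C : Ω → Fin d → ℝ, IsClosed (Pb C) ∧ IsClosed (Ps C) := by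
  intro U V Pb Ps
  have key : ∀ (C : Ω → Fin d → ℝ) (v : Fin r × Fin s → ℝ), IsClosed {x | v ∈ V x C} := by
    intro C v
    refine aux_closed (fun x => {v | ∃ W ∈ A x, v ≤ U (W + C)}) ?_ ?_ ?_ v
    · rintro x y a ha0 ha1 v ⟨W, hW, hv⟩ w ⟨W', hW', hw⟩
      refine ⟨a • W + (1 - a) • W', hAcomb x y a ha0 ha1
        (Set.add_mem_add (Set.smul_mem_smul_set hW) (Set.smul_mem_smul_set hW')), ?_⟩
      have ha1' : 0 ≤ 1 - a := by linarith
      intro ij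
      have h1 := mul_le_mul_of_nonneg_left (hv ij) ha0
      have h2 := mul_le_mul_of_nonneg_left (hw ij) ha1'
      have h3 : a * U (W + C) ij + (1 - a) * U (W' + C) ij
          ≤ U (a • W + (1 - a) • W' + C) ij := by
        simp only [U, Finset.mul_sum, ← Finset.sum_add_distrib]
        refine Finset.sum_le_sum fun ω _ => ?_
        have h := (hconc ij.1).2 (Set.mem_univ ((W + C) ω)) (Set.mem_univ ((W' + C) ω))
          ha0 ha1' (by ring)
        have he : a • (W + C) ω + (1 - a) • (W' + C) ω = (a • W + (1 - a) • W' + C) ω := by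
          ext k
          simp only [Pi.add_apply, Pi.smul_apply, smul_eq_mul]
          ring
        rw [he] at h
        simp only [smul_eq_mul] at h
        have := mul_le_mul_of_nonneg_left h (hQ0 ij.2 ω)
        linarith
      simp only [Pi.add_apply, Pi.smul_apply, smul_eq_mul]
      linarith
    · rintro x y hxy v ⟨W, hW, hv⟩
      exact ⟨W, hAmono _ _ hxy hW, hv⟩
    · rintro x y ⟨v, W, hW, hv⟩
      have h := hAtr x W hW (y - x)
      rw [add_sub_cancel] at h
      exact ⟨_, _, h, le_rfl⟩
  have key2 : ∀ C : Ω → Fin d → ℝ, IsClosed {x | V x0 0 ⊆ V x C} := by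
    intro C
    have h : {x | V x0 0 ⊆ V x C} = ⋂ v ∈ V x0 0, {x | v ∈ V x C} := by
      ext x
      simp only [Set.mem_ofPred_eq, Set.mem_iInter]
      rfl
    rw [h]
    exact isClosed_biInter fun v _ => key C v
  intro C
  exact ⟨(key2 C).preimage (f := fun p => x0 - p) (by fun_prop),
    (key2 (-C)).preimage (f := fun p => x0 + p) (by fun_prop)⟩
end

section
/- For every claim C : Ω → ℝ^d and every p ∈ ℝ^d: p belongs to the indifference buy price bound bd P^b(C) if and only if (i) V(x0 − p, C) ⊇ V(x0, 0) and (ii) for every ε ∈ ℝ^d with all coordinates strictly positive, V(x0 − p − ε, C) ⊉ V(x0, 0). -/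
open Pointwise

theorem stmt13
    {d r s : ℕ} (hd : 0 < d) (hr : 0 < r) (hs : 0 < s)
    {Ω : Type} [Fintype Ω] [Nonempty Ω]
    (Q : Fin s → Ω → ℝ)
    (hQ0 : ∀ j ω, 0 ≤ Q j ω) (hQ1 : ∀ j, ∑ ω : Ω, Q j ω = 1)
    (u : Fin r → (Fin d → ℝ) → ℝ)
    (hcont : ∀ i, Continuous (u i))
    (hconc : ∀ i, ConcaveOn ℝ Set.univ (u i))
    (hmono : ∀ i, Monotone (u i))
    (hstrict : ∀ i (x y : Fin d → ℝ), (∀ k, x k < y k) → u i x < u i y)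
    (A : (Fin d → ℝ) → Set (Ω → Fin d → ℝ))
    (hAconv : ∀ x, Convex ℝ (A x))
    (hAcomb : ∀ (x y : Fin d → ℝ) (a : ℝ), 0 ≤ a → a ≤ 1 →
      a • A x + (1 - a) • A y ⊆ A (a • x + (1 - a) • y))
    (hAmono : ∀ x y : Fin d → ℝ, x ≤ y → A x ⊆ A y)
    (hAtr : ∀ (x : Fin d → ℝ) (W : Ω → Fin d → ℝ), W ∈ A x →
      ∀ c : Fin d → ℝ, (fun ω => W ω + c) ∈ A (x + c))
    (hAcont : ∀ (x : Fin d → ℝ) (xk : ℕ → Fin d → ℝ), Antitone xk →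
      Filter.Tendsto xk Filter.atTop (nhds x) → A x = ⋂ n, A (xk n))
    (x0 : Fin d → ℝ) :
    let U : (Ω → Fin d → ℝ) → (Fin r × Fin s → ℝ) :=
      fun W ij => ∑ ω : Ω, Q ij.2 ω * u ij.1 (W ω)
    let V : (Fin d → ℝ) → (Ω → Fin d → ℝ) → Set (Fin r × Fin s → ℝ) :=
      fun x C => closure {v | ∃ W ∈ A x, v ≤ U (W + C)}
    let Pb : (Ω → Fin d → ℝ) → Set (Fin d → ℝ) :=
      fun C => {p | V x0 0 ⊆ V (x0 - p) C}
    let Ps : (Ω → Fin d → ℝ) → Set (Fin d → ℝ) :=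
      fun C => {p | V x0 0 ⊆ V (x0 + p) (-C)}
    ∀ (C : Ω → Fin d → ℝ) (p : Fin d → ℝ),
      p ∈ frontier (Pb C) ↔
        (V x0 0 ⊆ V (x0 - p) C ∧
          ∀ ε : Fin d → ℝ, (∀ k, 0 < ε k) → ¬ V x0 0 ⊆ V (x0 - p - ε) C) := by
  intro U V Pb Ps C p
  have hcomb : ∀ (x y : Fin d → ℝ) (a : ℝ), 0 ≤ a → a ≤ 1 → ∀ v w : Fin r × Fin s → ℝ,
      (∃ W ∈ A x, v ≤ U (W + C)) → (∃ W ∈ A y, w ≤ U (W + C)) →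
      ∃ W ∈ A (a • x + (1 - a) • y), a • v + (1 - a) • w ≤ U (W + C) := by
    rintro x y a ha0 ha1 v w ⟨W, hW, hv⟩ ⟨Y, hY, hw⟩
    refine ⟨a • W + (1 - a) • Y, hAcomb x y a ha0 ha1
      (Set.add_mem_add (Set.smul_mem_smul_set hW) (Set.smul_mem_smul_set hY)), ?_⟩
    intro ij
    have h1 := mul_le_mul_of_nonneg_left (hv ij) ha0
    have h2 := mul_le_mul_of_nonneg_left (hw ij) (sub_nonneg.2 ha1)
    have h3 : a * U (W + C) ij + (1 - a) * U (Y + C) ij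
        ≤ U (a • W + (1 - a) • Y + C) ij := by
      simp only [U]
      rw [Finset.mul_sum, Finset.mul_sum, ← Finset.sum_add_distrib]
      apply Finset.sum_le_sum
      intro ω _
      have h := (hconc ij.1).2 (Set.mem_univ ((W + C) ω)) (Set.mem_univ ((Y + C) ω))
        ha0 (sub_nonneg.2 ha1) (by ring)
      have he : a • (W + C) ω + (1 - a) • (Y + C) ω = (a • W + (1 - a) • Y + C) ω := by
        ext k
        simp only [Pi.add_apply, Pi.smul_apply, smul_eq_mul]
        ring
      rw [he] at h
      have h' := mul_le_mul_of_nonneg_left h (hQ0 ij.2 ω)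
      simp only [smul_eq_mul] at h'
      linarith
    simp only [Pi.add_apply, Pi.smul_apply, smul_eq_mul]
    linarith
  have hVmono : ∀ x y : Fin d → ℝ, x ≤ y → V x C ⊆ V y C := by
    intro x y hxy
    apply closure_mono
    rintro v ⟨W, hW, h⟩
    exact ⟨W, hAmono x y hxy hW, h⟩
  have hlow : ∀ q q' : Fin d → ℝ, q' ≤ q → q ∈ Pb C → q' ∈ Pb C := by
    intro q q' hq h
    exact Set.Subset.trans h (hVmono _ _ (sub_le_sub_left hq x0))
  have hkey : ∀ (x : Fin d → ℝ) (v : Fin r × Fin s → ℝ),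
      (∀ δ : ℝ, 0 < δ → v ∈ V (x + fun _ => δ) C) → v ∈ V x C := by
    intro x v h
    have hw : ∀ n : ℕ, ∃ w : Fin r × Fin s → ℝ,
        (∃ W ∈ A (x + fun _ => 1 / ((n : ℝ) + 1)), w ≤ U (W + C)) ∧
        dist w v < 1 / ((n : ℝ) + 1) := by
      intro n
      have hn : (0 : ℝ) < 1 / ((n : ℝ) + 1) := Nat.one_div_pos_of_nat
      obtain ⟨w, hw, hd⟩ := Metric.mem_closure_iff.1 (h _ hn) _ hn
      exact ⟨w, hw, by rwa [dist_comm]⟩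
    choose w hw hwd using hw
    obtain ⟨t, ht⟩ : ∃ t, ∃ W ∈ A (x - 1), t ≤ U (W + C) := by
      obtain ⟨W, hW, -⟩ := hw 0
      have := hAtr _ W hW (fun _ => -2)
      have he : ((x + fun _ => 1 / (((0 : ℕ) : ℝ) + 1)) + fun _ => (-2 : ℝ)) = x - 1 := by
        ext k
        simp only [Pi.add_apply, Pi.sub_apply, Pi.one_apply]
        push_cast
        ring
      rw [he] at this
      exact ⟨_, _, this, le_refl _⟩
    have h0 := tendsto_one_div_add_atTop_nhds_zero_nat (𝕜 := ℝ)
    have hwt : Filter.Tendsto w Filter.atTop (nhds v) := by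
      rw [tendsto_iff_dist_tendsto_zero]
      exact squeeze_zero (fun _ => dist_nonneg) (fun n => (hwd n).le) h0
    have hat : Filter.Tendsto (fun n : ℕ => (1 + 1 / ((n : ℝ) + 1))⁻¹) Filter.atTop
        (nhds 1) := by
      have := (h0.const_add 1).inv₀ (by norm_num)
      simpa using this
    have hlim : Filter.Tendsto (fun n : ℕ => (1 + 1 / ((n : ℝ) + 1))⁻¹ • w n +
        (1 - (1 + 1 / ((n : ℝ) + 1))⁻¹) • t) Filter.atTop (nhds v) := by
      have := (hat.smul hwt).add ((hat.const_sub 1).smul_const t)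
      simpa using this
    refine mem_closure_of_tendsto hlim (Filter.Eventually.of_forall fun n => ?_)
    have hn : (0 : ℝ) < 1 / ((n : ℝ) + 1) := Nat.one_div_pos_of_nat
    have := hcomb _ _ (1 + 1 / ((n : ℝ) + 1))⁻¹ (by positivity)
      (inv_le_one_of_one_le₀ (by linarith)) _ _ (hw n) ht
    have he : (1 + 1 / ((n : ℝ) + 1))⁻¹ • (x + fun _ => 1 / ((n : ℝ) + 1)) +
        (1 - (1 + 1 / ((n : ℝ) + 1))⁻¹) • (x - 1) = x := by
      ext k
      simp only [Pi.add_apply, Pi.smul_apply, smul_eq_mul, Pi.sub_apply, Pi.one_apply]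
      generalize 1 / ((n : ℝ) + 1) = δ at hn
      have : (1 + δ) ≠ 0 := by positivity
      field_simp
      ring
    rw [he] at this
    exact this
  have hclosed : IsClosed (Pb C) := by
    refine isClosed_of_closure_subset fun q hq => ?_
    intro v hv
    refine hkey _ _ fun δ hδ => ?_
    obtain ⟨q', hq', hd'⟩ := Metric.mem_closure_iff.1 hq δ hδ
    have hle : (q - fun _ => δ) ≤ q' := by
      intro k
      have := (dist_le_pi_dist q q' k).trans_lt hd'
      rw [Real.dist_eq, abs_lt] at this
      simp only [Pi.sub_apply]
      linarith [this.2]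
    have := hlow _ _ hle hq' hv
    convert this using 2
    abel
  rw [hclosed.frontier_eq, Set.mem_sdiff]
  refine and_congr Iff.rfl ?_
  have hshift : ∀ ε : Fin d → ℝ, V x0 0 ⊆ V (x0 - p - ε) C ↔ p + ε ∈ Pb C := by
    intro ε
    rw [sub_sub]
    exact Iff.rfl
  constructor
  · intro hni ε hε hsub
    rw [hshift] at hsub
    apply hni
    rw [mem_interior]
    refine ⟨Set.univ.pi fun k => Set.Iio (p k + ε k), ?_, ?_, ?_⟩
    · intro q hq
      exact hlow _ _ (fun k => (hq k trivial).le) hsub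
    · exact isOpen_set_pi Set.finite_univ fun _ _ => isOpen_Iio
    · intro k _
      simp [hε k]
  · intro h hi
    rw [mem_interior_iff_mem_nhds, Metric.mem_nhds_iff] at hi
    obtain ⟨η, hη, hb⟩ := hi
    refine h (fun _ => η / 2) (fun _ => by positivity) ((hshift _).2 (hb ?_))
    rw [Metric.mem_ball, dist_pi_lt_iff hη]
    intro k
    rw [Real.dist_eq, Pi.add_apply, add_sub_cancel_left, abs_of_pos (by positivity)]
    linarith
end

section
/- For every claim C : Ω → ℝ^d and every p ∈ ℝ^d: p belongs to the indifference sell price bound bd P^s(C) if and only if (i) V(x0 + p, −C) ⊇ V(x0, 0) and (ii) for every ε ∈ ℝ^d with all coordinates strictly positive, V(x0 + p − ε, −C) ⊉ V(x0, 0). -/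
open Pointwise

theorem stmt14
    {d r s : ℕ} (hd : 0 < d) (hr : 0 < r) (hs : 0 < s)
    {Ω : Type} [Fintype Ω] [Nonempty Ω]
    (Q : Fin s → Ω → ℝ)
    (hQ0 : ∀ j ω, 0 ≤ Q j ω) (hQ1 : ∀ j, ∑ ω : Ω, Q j ω = 1)
    (u : Fin r → (Fin d → ℝ) → ℝ)
    (hcont : ∀ i, Continuous (u i))
    (hconc : ∀ i, ConcaveOn ℝ Set.univ (u i))
    (hmono : ∀ i, Monotone (u i))
    (hstrict : ∀ i (x y : Fin d → ℝ), (∀ k, x k < y k) → u i x < u i y)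
    (A : (Fin d → ℝ) → Set (Ω → Fin d → ℝ))
    (hAconv : ∀ x, Convex ℝ (A x))
    (hAcomb : ∀ (x y : Fin d → ℝ) (a : ℝ), 0 ≤ a → a ≤ 1 →
      a • A x + (1 - a) • A y ⊆ A (a • x + (1 - a) • y))
    (hAmono : ∀ x y : Fin d → ℝ, x ≤ y → A x ⊆ A y)
    (hAtr : ∀ (x : Fin d → ℝ) (W : Ω → Fin d → ℝ), W ∈ A x →
      ∀ c : Fin d → ℝ, (fun ω => W ω + c) ∈ A (x + c))
    (hAcont : ∀ (x : Fin d → ℝ) (xk : ℕ → Fin d → ℝ), Antitone xk →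
      Filter.Tendsto xk Filter.atTop (nhds x) → A x = ⋂ n, A (xk n))
    (x0 : Fin d → ℝ) :
    let U : (Ω → Fin d → ℝ) → (Fin r × Fin s → ℝ) :=
      fun W ij => ∑ ω : Ω, Q ij.2 ω * u ij.1 (W ω)
    let V : (Fin d → ℝ) → (Ω → Fin d → ℝ) → Set (Fin r × Fin s → ℝ) :=
      fun x C => closure {v | ∃ W ∈ A x, v ≤ U (W + C)}
    let Pb : (Ω → Fin d → ℝ) → Set (Fin d → ℝ) :=
      fun C => {p | V x0 0 ⊆ V (x0 - p) C}
    let Ps : (Ω → Fin d → ℝ) → Set (Fin d → ℝ) :=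
      fun C => {p | V x0 0 ⊆ V (x0 + p) (-C)}
    ∀ (C : Ω → Fin d → ℝ) (p : Fin d → ℝ),
      p ∈ frontier (Ps C) ↔
        (V x0 0 ⊆ V (x0 + p) (-C) ∧
          ∀ ε : Fin d → ℝ, (∀ k, 0 < ε k) → ¬ V x0 0 ⊆ V (x0 + p - ε) (-C)) := by
  intro U V Pb Ps C p
  have hU : ∀ (a : ℝ), 0 ≤ a → a ≤ 1 → ∀ W W' : Ω → Fin d → ℝ,
      a • U W + (1 - a) • U W' ≤ U (a • W + (1 - a) • W') := by
    intro a ha ha1 W W' ij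
    simp only [U, Pi.add_apply, Pi.smul_apply, smul_eq_mul, Finset.mul_sum]
    rw [← Finset.sum_add_distrib]
    refine Finset.sum_le_sum fun ω _ => ?_
    have h := (hconc ij.1).2 (Set.mem_univ (W ω)) (Set.mem_univ (W' ω)) ha
      (sub_nonneg.2 ha1) (by ring)
    simp only [smul_eq_mul] at h
    have := mul_le_mul_of_nonneg_left h (hQ0 ij.2 ω)
    linarith
  have hVmono : ∀ x y, x ≤ y → V x (-C) ⊆ V y (-C) := by
    intro x y hxy
    refine closure_mono ?_
    rintro v ⟨W, hW, hv⟩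
    exact ⟨W, hAmono _ _ hxy hW, hv⟩
  -- intersection property
  have hint : ∀ (x : Fin d → ℝ) (v : Fin r × Fin s → ℝ),
      (∀ δ : ℝ, 0 < δ → v ∈ V (x + fun _ => δ) (-C)) → v ∈ V x (-C) := by
    intro x v hv
    have hne : (closure {v | ∃ W ∈ A (x + fun _ => (1:ℝ)), v ≤ U (W + -C)}).Nonempty :=
      ⟨v, hv 1 one_pos⟩
    rw [closure_nonempty_iff] at hne
    obtain ⟨_, W1, hW1, _⟩ := hne
    have hW0 := hAtr _ _ hW1 (fun _ => -2)
    set W0 : Ω → Fin d → ℝ := fun ω => W1 ω + fun _ => -2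
    set z := U (W0 + -C)
    have key : ∀ δ : ℝ, 0 < δ →
        (δ / (1 + δ)) • z + (1 - δ / (1 + δ)) • v ∈ V x (-C) := by
      intro δ hδ
      have h1 : (0:ℝ) < 1 + δ := by linarith
      have ha : 0 ≤ δ / (1 + δ) := by positivity
      have ha1 : δ / (1 + δ) ≤ 1 := by rw [div_le_one h1]; linarith
      have heq : (δ / (1 + δ)) * (-1) + (1 - δ / (1 + δ)) * δ = 0 := by
        field_simp; ring
      generalize δ / (1 + δ) = a at *
      have hc : Continuous fun w : Fin r × Fin s → ℝ => a • z + (1 - a) • w := by fun_prop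
      refine map_mem_closure (f := fun w : Fin r × Fin s → ℝ => a • z + (1 - a) • w) hc (hv δ hδ) ?_
      rintro w ⟨W, hW, hw⟩
      refine ⟨a • W0 + (1 - a) • W, ?_, ?_⟩
      · have h := hAcomb _ _ a ha ha1
          (Set.add_mem_add (Set.smul_mem_smul_set hW0) (Set.smul_mem_smul_set hW))
        convert h using 2
        ext k
        simp only [Pi.add_apply, Pi.smul_apply, smul_eq_mul]
        linarith
      · have h2 : a • W0 + (1 - a) • W + -C = a • (W0 + -C) + (1 - a) • (W + -C) := by
          module
        rw [h2]
        refine le_trans ?_ (hU a ha ha1 _ _)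
        exact add_le_add le_rfl (smul_le_smul_of_nonneg_left hw (sub_nonneg.2 ha1))
    have hlim : Filter.Tendsto
        (fun δ : ℝ => (δ / (1 + δ)) • z + (1 - δ / (1 + δ)) • v) (nhdsWithin 0 (Set.Ioi 0))
        (nhds v) := by
      have hca : ContinuousAt (fun δ : ℝ => δ / (1 + δ)) 0 := by
        apply ContinuousAt.div <;> first | fun_prop | norm_num
      have hcc : ContinuousAt
          (fun δ : ℝ => (δ / (1 + δ)) • z + (1 - δ / (1 + δ)) • v) 0 := by
        fun_prop
      have := hcc.tendsto
      simp only [zero_div, zero_smul, sub_zero, one_smul, zero_add] at this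
      exact this.mono_left nhdsWithin_le_nhds
    exact isClosed_closure.mem_of_tendsto hlim
      (Filter.eventually_of_mem self_mem_nhdsWithin fun δ hδ => key δ hδ)
  have hup : ∀ p q, p ≤ q → p ∈ Ps C → q ∈ Ps C := fun p q hpq hp =>
    Set.Subset.trans hp (hVmono _ _ (add_le_add le_rfl hpq))
  have hclosed : IsClosed (Ps C) := by
    refine isClosed_of_closure_subset fun p hp => ?_
    intro v hv
    refine hint _ _ fun δ hδ => ?_
    obtain ⟨q, hq, hpq⟩ := Metric.mem_closure_iff.1 hp δ hδ
    have hle : q ≤ p + fun _ => δ := by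
      intro k
      have h1 := (dist_le_pi_dist p q k).trans hpq.le
      rw [Real.dist_eq] at h1
      have := (abs_le.1 h1).1
      simp only [Pi.add_apply]
      linarith
    have := hup _ _ hle hq hv
    rwa [← add_assoc] at this
  rw [hclosed.frontier_eq, Set.mem_sdiff]
  refine and_congr Iff.rfl ⟨fun h ε hε hsub => h ?_, fun h hi => ?_⟩
  · have hmem : p - ε ∈ Ps C := by
      show V x0 0 ⊆ V (x0 + (p - ε)) (-C)
      rwa [← add_sub_assoc]
    rw [mem_interior]
    refine ⟨Set.pi Set.univ fun k => Set.Ioi ((p - ε) k), fun q hq => ?_,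
      isOpen_set_pi Set.finite_univ fun k _ => isOpen_Ioi, fun k _ => ?_⟩
    · exact hup _ _ (fun k => le_of_lt (hq k (Set.mem_univ k))) hmem
    · simpa using hε k
  · obtain ⟨δ, hδ, hb⟩ := Metric.mem_nhds_iff.1 (mem_interior_iff_mem_nhds.1 hi)
    refine h (fun _ => δ / 2) (fun _ => by positivity) ?_
    have : p - (fun _ => δ / 2) ∈ Ps C := by
      apply hb
      rw [Metric.mem_ball, dist_pi_lt_iff hδ]
      intro k
      simp only [Pi.sub_apply, Real.dist_eq]
      rw [abs_lt]
      constructor <;> linarith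
    have h3 : V x0 0 ⊆ V (x0 + (p - fun _ => δ / 2)) (-C) := this
    rwa [← add_sub_assoc] at h3
end

section
/- Assume in addition that each utility u^i is uniformly continuous on ℝ^d and that A(x) = x + A(0) for all x ∈ ℝ^d. Then for every claim C : Ω → ℝ^d, for every p ∈ bd P^b(C) there is no ε > 0 such that V(x0, 0) + B(0, ε) ⊆ V(x0 − p, C), where B(0, ε) is the open Euclidean ball in ℝ^q; similarly, for every p ∈ bd P^s(C) there is no ε > 0 such that V(x0, 0) + B(0, ε) ⊆ V(x0 + p, −C). -/
open Pointwise

theorem stmt15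
    {d r s : ℕ} (hd : 0 < d) (hr : 0 < r) (hs : 0 < s)
    {Ω : Type} [Fintype Ω] [Nonempty Ω]
    (Q : Fin s → Ω → ℝ)
    (hQ0 : ∀ j ω, 0 ≤ Q j ω) (hQ1 : ∀ j, ∑ ω : Ω, Q j ω = 1)
    (u : Fin r → (Fin d → ℝ) → ℝ)
    (hcont : ∀ i, Continuous (u i))
    (hconc : ∀ i, ConcaveOn ℝ Set.univ (u i))
    (hmono : ∀ i, Monotone (u i))
    (hstrict : ∀ i (x y : Fin d → ℝ), (∀ k, x k < y k) → u i x < u i y)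
    (A : (Fin d → ℝ) → Set (Ω → Fin d → ℝ))
    (hAconv : ∀ x, Convex ℝ (A x))
    (hAcomb : ∀ (x y : Fin d → ℝ) (a : ℝ), 0 ≤ a → a ≤ 1 →
      a • A x + (1 - a) • A y ⊆ A (a • x + (1 - a) • y))
    (hAmono : ∀ x y : Fin d → ℝ, x ≤ y → A x ⊆ A y)
    (hAtr : ∀ (x : Fin d → ℝ) (W : Ω → Fin d → ℝ), W ∈ A x →
      ∀ c : Fin d → ℝ, (fun ω => W ω + c) ∈ A (x + c))
    (hAcont : ∀ (x : Fin d → ℝ) (xk : ℕ → Fin d → ℝ), Antitone xk →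
      Filter.Tendsto xk Filter.atTop (nhds x) → A x = ⋂ n, A (xk n))
    (hucont : ∀ i, UniformContinuous (u i))
    (hA0 : ∀ x : Fin d → ℝ, A x = (fun (W : Ω → Fin d → ℝ) => fun ω => x + W ω) '' A 0)
    (x0 : Fin d → ℝ) :
    let U : (Ω → Fin d → ℝ) → (Fin r × Fin s → ℝ) :=
      fun W ij => ∑ ω : Ω, Q ij.2 ω * u ij.1 (W ω)
    let V : (Fin d → ℝ) → (Ω → Fin d → ℝ) → Set (Fin r × Fin s → ℝ) :=
      fun x C => closure {v | ∃ W ∈ A x, v ≤ U (W + C)}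
    let Pb : (Ω → Fin d → ℝ) → Set (Fin d → ℝ) :=
      fun C => {p | V x0 0 ⊆ V (x0 - p) C}
    let Ps : (Ω → Fin d → ℝ) → Set (Fin d → ℝ) :=
      fun C => {p | V x0 0 ⊆ V (x0 + p) (-C)}
    ∀ C : Ω → Fin d → ℝ,
      (∀ p ∈ frontier (Pb C), ¬ ∃ ε : ℝ, 0 < ε ∧
        V x0 0 + {v : Fin r × Fin s → ℝ | Real.sqrt (∑ ij, v ij ^ 2) < ε}
          ⊆ V (x0 - p) C) ∧
      (∀ p ∈ frontier (Ps C), ¬ ∃ ε : ℝ, 0 < ε ∧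
        V x0 0 + {v : Fin r × Fin s → ℝ | Real.sqrt (∑ ij, v ij ^ 2) < ε}
          ⊆ V (x0 + p) (-C)) := by
  intro U V Pb Ps C
  have key : ∀ ε : ℝ, 0 < ε → ∃ δ > 0, ∀ (D : Ω → Fin d → ℝ) (x y : Fin d → ℝ), dist x y < δ →
      V x0 0 + {v : Fin r × Fin s → ℝ | Real.sqrt (∑ ij, v ij ^ 2) < ε} ⊆ V x D →
      V x0 0 ⊆ V y D := by
    intro ε hε
    set q : ℝ := (Fintype.card (Fin r × Fin s) : ℝ) with hq
    have hq0 : 0 ≤ q := Nat.cast_nonneg _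
    set η : ℝ := ε / (q + 1) with hη
    have hη0 : 0 < η := by positivity
    have hηε : η * (q + 1) = ε := by rw [hη]; field_simp
    have h1 : ∀ i, ∃ δ > 0, ∀ a b, dist a b < δ → dist (u i a) (u i b) < η := fun i =>
      Metric.uniformContinuous_iff.1 (hucont i) η hη0 |>.imp fun δ h => ⟨h.1, fun a b hab => h.2 hab⟩
    choose δ hδ0 hδ using h1
    have : Nonempty (Fin r) := ⟨⟨0, hr⟩⟩
    obtain ⟨i0, hi0⟩ := Finite.exists_min δ
    refine ⟨δ i0, hδ0 i0, fun D x y hxy hsub v hv => ?_⟩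
    have hmem : v + (fun _ => η) ∈ V x D := by
      refine hsub (Set.add_mem_add hv ?_)
      simp only [Set.mem_ofPred_eq]
      rw [Real.sqrt_lt' hε]
      simp only [Finset.sum_const, Finset.card_univ, nsmul_eq_mul]
      rw [← hq, ← hηε]
      nlinarith [mul_pos hη0 hη0, mul_nonneg hq0 (mul_pos hη0 hη0).le,
        mul_nonneg (mul_nonneg hq0 hq0) (mul_pos hη0 hη0).le]
    have hmap : Set.MapsTo (fun w : Fin r × Fin s → ℝ => w - (fun _ => η))
        {v | ∃ W ∈ A x, v ≤ U (W + D)} {v | ∃ W ∈ A y, v ≤ U (W + D)} := by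
      rintro w ⟨W, hW, hw⟩
      refine ⟨fun ω => W ω + (y - x), by simpa using hAtr x W hW (y - x), fun ij => ?_⟩
      have h2 : U (W + D) ij - η ≤ U ((fun ω => W ω + (y - x)) + D) ij := by
        simp only [U]
        have h3 : η = ∑ ω : Ω, Q ij.2 ω * η := by rw [← Finset.sum_mul, hQ1, one_mul]
        rw [h3, ← Finset.sum_sub_distrib]
        refine Finset.sum_le_sum fun ω _ => ?_
        rw [← mul_sub]
        refine mul_le_mul_of_nonneg_left ?_ (hQ0 _ _)
        have h4 := hδ ij.1 ((W + D) ω) (((fun ω => W ω + (y - x)) + D) ω) (by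
          refine lt_of_eq_of_lt ?_ (hxy.trans_le (hi0 ij.1))
          rw [dist_eq_norm, dist_eq_norm]
          congr 1
          simp only [Pi.add_apply]
          abel)
        rw [Real.dist_eq] at h4
        linarith [(abs_lt.1 h4).2]
      have h5 := hw ij
      simp only [Pi.sub_apply]
      linarith
    have := hmap.closure (by fun_prop) hmem
    simpa using this
  refine ⟨?_, ?_⟩
  · rintro p hp ⟨ε, hε, hsub⟩
    obtain ⟨δ, hδ, h⟩ := key ε hε
    refine hp.2 (mem_interior_iff_mem_nhds.2 (Metric.mem_nhds_iff.2 ⟨δ, hδ, fun p' hp' => ?_⟩))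
    refine h C (x0 - p) (x0 - p') ?_ hsub
    rw [dist_sub_left, dist_comm]; exact hp'
  · rintro p hp ⟨ε, hε, hsub⟩
    obtain ⟨δ, hδ, h⟩ := key ε hε
    refine hp.2 (mem_interior_iff_mem_nhds.2 (Metric.mem_nhds_iff.2 ⟨δ, hδ, fun p' hp' => ?_⟩))
    refine h (-C) (x0 + p) (x0 + p') ?_ hsub
    rw [dist_add_left, dist_comm]; exact hp'
end

section
/- Assume in addition that A(0) + A(0) ⊆ A(0) (Minkowski sum). For a claim C : Ω → ℝ^d define the set of superhedging portfolios SHP(C) = {p ∈ ℝ^d : C ∈ A(p)} and the set of subhedging portfolios SubHP(C) = −SHP(−C). Then SHP(C) ⊆ P^s(C) and SubHP(C) ⊆ P^b(C). -/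
open Pointwise

theorem stmt17
    {d r s : ℕ} (hd : 0 < d) (hr : 0 < r) (hs : 0 < s)
    {Ω : Type} [Fintype Ω] [Nonempty Ω]
    (Q : Fin s → Ω → ℝ)
    (hQ0 : ∀ j ω, 0 ≤ Q j ω) (hQ1 : ∀ j, ∑ ω : Ω, Q j ω = 1)
    (u : Fin r → (Fin d → ℝ) → ℝ)
    (hcont : ∀ i, Continuous (u i))
    (hconc : ∀ i, ConcaveOn ℝ Set.univ (u i))
    (hmono : ∀ i, Monotone (u i))
    (hstrict : ∀ i (x y : Fin d → ℝ), (∀ k, x k < y k) → u i x < u i y)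
    (A : (Fin d → ℝ) → Set (Ω → Fin d → ℝ))
    (hAtr : ∀ (x : Fin d → ℝ) (W : Ω → Fin d → ℝ), W ∈ A x →
      ∀ c : Fin d → ℝ, (fun ω => W ω + c) ∈ A (x + c))
    (hAadd : A 0 + A 0 ⊆ A 0)
    (x0 : Fin d → ℝ) :
    let U : (Ω → Fin d → ℝ) → (Fin r × Fin s → ℝ) :=
      fun W ij => ∑ ω : Ω, Q ij.2 ω * u ij.1 (W ω)
    let V : (Fin d → ℝ) → (Ω → Fin d → ℝ) → Set (Fin r × Fin s → ℝ) :=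
      fun x C => closure {v | ∃ W ∈ A x, v ≤ U (W + C)}
    let Pb : (Ω → Fin d → ℝ) → Set (Fin d → ℝ) :=
      fun C => {p | V x0 0 ⊆ V (x0 - p) C}
    let Ps : (Ω → Fin d → ℝ) → Set (Fin d → ℝ) :=
      fun C => {p | V x0 0 ⊆ V (x0 + p) (-C)}
    let SHP : (Ω → Fin d → ℝ) → Set (Fin d → ℝ) := fun C => {p | C ∈ A p}
    ∀ C : Ω → Fin d → ℝ, SHP C ⊆ Ps C ∧ -SHP (-C) ⊆ Pb C := by
  have key : ∀ (x y : Fin d → ℝ) (W Z : Ω → Fin d → ℝ), W ∈ A x → Z ∈ A y → W + Z ∈ A (x + y) := by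
    intro x y W Z hW hZ
    have h1 := hAtr x W hW (-x)
    have h2 := hAtr y Z hZ (-y)
    rw [add_neg_cancel] at h1 h2
    have h3 := hAtr 0 _ (hAadd (Set.add_mem_add h1 h2)) (x + y)
    rw [zero_add] at h3
    convert h3 using 1
    funext ω
    simp only [Pi.add_apply]
    abel
  intro U V Pb Ps SHP C
  constructor
  · intro p hp
    refine closure_mono ?_
    rintro v ⟨W, hW, hv⟩
    refine ⟨W + C, key _ _ _ _ hW hp, ?_⟩
    rw [add_neg_cancel_right]
    rwa [add_zero] at hv
  · intro p hp
    refine closure_mono ?_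
    rintro v ⟨W, hW, hv⟩
    refine ⟨W + -C, ?_, ?_⟩
    · rw [sub_eq_add_neg]
      exact key _ _ _ _ hW hp
    · rw [neg_add_cancel_right]
      rwa [add_zero] at hv
end

section
/- Inner approximation of the set-valued buy price: let ε > 0, let k ∈ ℝ^q have all coordinates strictly positive, and let X¹,…,X^l ∈ A(x0) be such that V(x0, 0) ⊆ conv{U(X¹),…,U(X^l)} − ℝ^q_+ + ε·{k}. If p ∈ ℝ^d is such that for every i ∈ {1,…,l} there exists W^i ∈ A(x0 − p) with U(W^i + C) ≥ U(X^i) + ε·k (componentwise in ℝ^q), then p ∈ P^b(C). -/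
open Pointwise

theorem stmt18
    {d r s : ℕ} (hd : 0 < d) (hr : 0 < r) (hs : 0 < s)
    {Ω : Type} [Fintype Ω] [Nonempty Ω]
    (Q : Fin s → Ω → ℝ)
    (hQ0 : ∀ j ω, 0 ≤ Q j ω) (hQ1 : ∀ j, ∑ ω : Ω, Q j ω = 1)
    (u : Fin r → (Fin d → ℝ) → ℝ)
    (hcont : ∀ i, Continuous (u i))
    (hconc : ∀ i, ConcaveOn ℝ Set.univ (u i))
    (hmono : ∀ i, Monotone (u i))
    (hstrict : ∀ i (x y : Fin d → ℝ), (∀ k, x k < y k) → u i x < u i y)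
    (A : (Fin d → ℝ) → Set (Ω → Fin d → ℝ))
    (hAconv : ∀ x, Convex ℝ (A x))
    (x0 : Fin d → ℝ) :
    let U : (Ω → Fin d → ℝ) → (Fin r × Fin s → ℝ) :=
      fun W ij => ∑ ω : Ω, Q ij.2 ω * u ij.1 (W ω)
    let V : (Fin d → ℝ) → (Ω → Fin d → ℝ) → Set (Fin r × Fin s → ℝ) :=
      fun x C => closure {v | ∃ W ∈ A x, v ≤ U (W + C)}
    let Pb : (Ω → Fin d → ℝ) → Set (Fin d → ℝ) :=
      fun C => {p | V x0 0 ⊆ V (x0 - p) C}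
    let Ps : (Ω → Fin d → ℝ) → Set (Fin d → ℝ) :=
      fun C => {p | V x0 0 ⊆ V (x0 + p) (-C)}
    ∀ (C : Ω → Fin d → ℝ) (ε : ℝ), 0 < ε →
      ∀ k : Fin r × Fin s → ℝ, (∀ ij, 0 < k ij) →
      ∀ (l : ℕ) (X : Fin l → Ω → Fin d → ℝ), (∀ i, X i ∈ A x0) →
        V x0 0 ⊆ convexHull ℝ (Set.range fun i => U (X i))
            - {y : Fin r × Fin s → ℝ | 0 ≤ y} + {ε • k} →
        ∀ p : Fin d → ℝ,
          (∀ i : Fin l, ∃ W ∈ A (x0 - p), U (X i) + ε • k ≤ U (W + C)) →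
          p ∈ Pb C := by
  intro U V Pb Ps C ε hε k hk l X hX hV p hp
  have hconv : Convex ℝ {v : Fin r × Fin s → ℝ | ∃ W ∈ A (x0 - p), v + ε • k ≤ U (W + C)} := by
    rintro v ⟨W, hW, hv⟩ w ⟨Z, hZ, hw⟩ a b ha hb hab
    refine ⟨a • W + b • Z, hAconv _ hW hZ ha hb hab, ?_⟩
    intro ij
    have h1 := mul_le_mul_of_nonneg_left (hv ij) ha
    have h2 := mul_le_mul_of_nonneg_left (hw ij) hb
    have h3 : a * U (W + C) ij + b * U (Z + C) ij ≤ U (a • W + b • Z + C) ij := by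
      simp only [U]
      rw [Finset.mul_sum, Finset.mul_sum, ← Finset.sum_add_distrib]
      refine Finset.sum_le_sum fun ω _ => ?_
      have h4 := (hconc ij.1).2 (Set.mem_univ ((W + C) ω)) (Set.mem_univ ((Z + C) ω)) ha hb hab
      have h5 : a • (W + C) ω + b • (Z + C) ω = (a • W + b • Z + C) ω := by
        ext t
        simp only [Pi.add_apply, Pi.smul_apply, smul_eq_mul]
        linear_combination (C ω t) * hab
      rw [h5] at h4
      have h6 := mul_le_mul_of_nonneg_left h4 (hQ0 ij.2 ω)
      simp only [smul_eq_mul] at h6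
      linarith
    simp only [Pi.add_apply, Pi.smul_apply, smul_eq_mul] at h1 h2 ⊢
    have h7 : a * v ij + b * w ij + ε * k ij
        = a * (v ij + ε * k ij) + b * (w ij + ε * k ij) := by
      linear_combination (-(ε * k ij)) * hab
    rw [h7]
    linarith
  have hsub := convexHull_min (s := Set.range fun i => U (X i))
    (by rintro _ ⟨i, rfl⟩; exact hp i) hconv
  intro v hv
  obtain ⟨c, ⟨e, he, y, hy, rfl⟩, z, hz, rfl⟩ := hV hv
  obtain ⟨W, hW, hle⟩ := hsub he
  rw [Set.mem_singleton_iff] at hz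
  subst hz
  refine subset_closure ⟨W, hW, le_trans ?_ hle⟩
  intro ij
  have := hy ij
  simp only [Pi.add_apply, Pi.sub_apply, Pi.zero_apply] at this ⊢
  linarith
end
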